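/- arXiv:1602.09046 — 4 statements merged into one kernel-verified Lean document; each statement's English description precedes it below -/
import Mathlib

section
/- Let n ≥ 1 and let z₁, …, zₙ be complex numbers such that there is a unique index i₀ with Re(z_{i₀}) > Re(zᵢ) for all i ≠ i₀. Then the complex softmax functional softmax_α(z₁,…,zₙ) := (∑ᵢ zᵢ e^{α zᵢ}) / (∑ⱼ e^{α zⱼ}), with real parameter α and complex exponentials, converges to z_{i₀} as α → +∞ (in particular the denominator is nonzero for all sufficiently large α). -/
open Filter Topology

/-- If `w` has negative real part, then `exp (α w) → 0` as `α → +∞` along the reals. -/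
theorem tendsto_exp_ofReal_mul_atTop_nhds_zero {w : ℂ} (hw : w.re < 0) :
    Tendsto (fun α : ℝ => Complex.exp ((α : ℂ) * w)) atTop (𝓝 0) := by
  rw [Complex.tendsto_exp_nhds_zero_iff]
  simpa using tendsto_id.atTop_mul_const_of_neg hw

/-- If `z i₀` has strictly maximal real part, then the exponential sum with coefficients `c`,
normalized by `exp (α z i₀)`, tends to `c i₀`. -/
theorem tendsto_sum_mul_exp_sub {ι : Type*} [Fintype ι] (c z : ι → ℂ) (i₀ : ι)
    (hmax : ∀ i, i ≠ i₀ → (z i).re < (z i₀).re) :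
    Tendsto (fun α : ℝ => ∑ i, c i * Complex.exp ((α : ℂ) * (z i - z i₀))) atTop
      (𝓝 (c i₀)) := by
  classical
  have hterm : ∀ i, Tendsto (fun α : ℝ => c i * Complex.exp ((α : ℂ) * (z i - z i₀))) atTop
      (𝓝 (if i = i₀ then c i else 0)) := by
    intro i
    by_cases hi : i = i₀
    · simp [hi]
    · have hre : (z i - z i₀).re < 0 := by simpa using hmax i hi
      simpa [hi] using (tendsto_exp_ofReal_mul_atTop_nhds_zero hre).const_mul (c i)
  simpa using tendsto_finsetSum Finset.univ fun i _ => hterm i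

/-- Factoring `exp (α w)` out of an exponential sum. -/
theorem sum_mul_exp_eq_mul_sum_mul_exp_sub {ι : Type*} [Fintype ι] (c z : ι → ℂ) (w α : ℂ) :
    ∑ i, c i * Complex.exp (α * z i) =
      Complex.exp (α * w) * ∑ i, c i * Complex.exp (α * (z i - w)) := by
  rw [Finset.mul_sum]
  refine Finset.sum_congr rfl fun i _ => ?_
  rw [mul_left_comm, ← Complex.exp_add]
  congr 2
  ring

/-- **Complex softmax at `α → +∞`.** For complex numbers `z₁, …, zₙ` (`n ≥ 1`) with a
unique index `i₀` of strictly maximal real part, the complex softmax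
`softmax_α(z) = (∑ᵢ zᵢ e^{α zᵢ}) / (∑ⱼ e^{α zⱼ})` converges to `z_{i₀}` as `α → +∞`,
and in particular the denominator is nonzero for all sufficiently large `α`. -/
theorem complex_softmax_tendsto_argmax_re (n : ℕ) (z : Fin (n + 1) → ℂ) (i₀ : Fin (n + 1))
    (hmax : ∀ i, i ≠ i₀ → (z i).re < (z i₀).re) :
    (∀ᶠ α : ℝ in Filter.atTop, (∑ j, Complex.exp ((α : ℂ) * z j)) ≠ 0) ∧
    Filter.Tendsto
      (fun α : ℝ =>
        (∑ i, z i * Complex.exp ((α : ℂ) * z i)) / (∑ j, Complex.exp ((α : ℂ) * z j)))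
      Filter.atTop (nhds (z i₀)) := by
  have hden := tendsto_sum_mul_exp_sub (fun _ => 1) z i₀ hmax
  have hnum := tendsto_sum_mul_exp_sub z z i₀ hmax
  have hfactor : ∀ α : ℝ, ∑ j, Complex.exp ((α : ℂ) * z j) = Complex.exp ((α : ℂ) * z i₀) *
      ∑ j, 1 * Complex.exp ((α : ℂ) * (z j - z i₀)) := fun α => by
    simpa only [one_mul] using sum_mul_exp_eq_mul_sum_mul_exp_sub (fun _ => 1) z (z i₀) α
  constructor
  · filter_upwards [hden.eventually_ne one_ne_zero] with α hα
    rw [hfactor]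
    exact mul_ne_zero (Complex.exp_ne_zero _) hα
  · have hquot := hnum.div hden one_ne_zero
    rw [div_one] at hquot
    refine hquot.congr fun α => ?_
    rw [hfactor, sum_mul_exp_eq_mul_sum_mul_exp_sub z z (z i₀) α,
      mul_div_mul_left _ _ (Complex.exp_ne_zero _)]
    rfl
end

section
/- Let n ≥ 1 and let z₁, …, zₙ be complex numbers such that there is a unique index i₀ with Re(z_{i₀}) < Re(zᵢ) for all i ≠ i₀. Then the complex softmax functional softmax_α(z₁,…,zₙ) := (∑ᵢ zᵢ e^{α zᵢ}) / (∑ⱼ e^{α zⱼ}), with real parameter α and complex exponentials, converges to z_{i₀} as α → −∞ (in particular the denominator is nonzero for all sufficiently negative α). -/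
open Filter Topology in
/-- For `w` of positive real part, `e^{α w} → 0` as the real parameter `α` tends to `-∞`. -/
theorem tendsto_exp_ofReal_mul_atBot {w : ℂ} (hw : 0 < w.re) :
    Tendsto (fun α : ℝ => Complex.exp ((α : ℂ) * w)) atBot (𝓝 0) := by
  rw [Complex.tendsto_exp_nhds_zero_iff]
  simpa using tendsto_id.atBot_mul_const hw

open Filter Topology in
/-- Weighted exponential sums, normalised by the term of strictly minimal real part, converge to
the weight of that term. -/
theorem tendsto_sum_mul_exp_sub_atBot {ι : Type*} [Fintype ι] (c z : ι → ℂ) (i₀ : ι)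
    (hmin : ∀ i, i ≠ i₀ → (z i₀).re < (z i).re) :
    Tendsto (fun α : ℝ => ∑ i, c i * Complex.exp ((α : ℂ) * (z i - z i₀))) atBot (𝓝 (c i₀)) := by
  classical
  have key : Tendsto (fun α : ℝ => ∑ i, c i * Complex.exp ((α : ℂ) * (z i - z i₀))) atBot
      (𝓝 (∑ i, if i = i₀ then c i else 0)) := by
    refine tendsto_finsetSum _ fun i _ => ?_
    by_cases h : i = i₀
    · simp [h]
    · have hre : 0 < (z i - z i₀).re := by simpa using hmin i h
      simpa [h] using (tendsto_exp_ofReal_mul_atBot hre).const_mul (c i)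
  simpa using key

/-- Factoring a reference exponential out of a weighted exponential sum. -/
theorem sum_mul_exp_eq_exp_mul_sum {ι : Type*} [Fintype ι] (c z : ι → ℂ) (a w : ℂ) :
    ∑ i, c i * Complex.exp (a * z i) =
      Complex.exp (a * w) * ∑ i, c i * Complex.exp (a * (z i - w)) := by
  rw [Finset.mul_sum]
  refine Finset.sum_congr rfl fun i _ => ?_
  rw [mul_left_comm, ← Complex.exp_add]
  ring_nf

/-- **Complex softmax at `α → −∞`.** For complex numbers `z₁, …, zₙ` (`n ≥ 1`) with a
unique index `i₀` of strictly minimal real part, the complex softmax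
`softmax_α(z) = (∑ᵢ zᵢ e^{α zᵢ}) / (∑ⱼ e^{α zⱼ})` converges to `z_{i₀}` as `α → −∞`,
and in particular the denominator is nonzero for all sufficiently negative `α`. -/
theorem complex_softmax_tendsto_argmin_re (n : ℕ) (z : Fin (n + 1) → ℂ) (i₀ : Fin (n + 1))
    (hmin : ∀ i, i ≠ i₀ → (z i₀).re < (z i).re) :
    (∀ᶠ α : ℝ in Filter.atBot, (∑ j, Complex.exp ((α : ℂ) * z j)) ≠ 0) ∧
    Filter.Tendsto
      (fun α : ℝ =>
        (∑ i, z i * Complex.exp ((α : ℂ) * z i)) / (∑ j, Complex.exp ((α : ℂ) * z j)))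
      Filter.atBot (nhds (z i₀)) := by
  have hnum := tendsto_sum_mul_exp_sub_atBot z z i₀ hmin
  have hden := tendsto_sum_mul_exp_sub_atBot (fun _ => 1) z i₀ hmin
  have hfactor (α : ℝ) := sum_mul_exp_eq_exp_mul_sum (fun _ => 1) z α (z i₀)
  simp only [one_mul] at hden hfactor
  constructor
  · filter_upwards [hden.eventually_ne one_ne_zero] with α hα
    rw [hfactor]
    exact mul_ne_zero (Complex.exp_ne_zero _) hα
  · have hquot := hnum.div hden one_ne_zero
    rw [div_one] at hquot
    refine hquot.congr fun α => ?_
    rw [hfactor, sum_mul_exp_eq_exp_mul_sum z z α (z i₀),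
      mul_div_mul_left _ _ (Complex.exp_ne_zero _), Pi.div_apply]
end

section
/- Let n ≥ 1 and let z₁, …, zₙ be complex numbers, and define the dual softmax functional softmax*_α(z₁,…,zₙ) := softmax_α(i·conj(z₁),…,i·conj(zₙ)). If there is a unique index i₀ with Im(z_{i₀}) > Im(zᵢ) for all i ≠ i₀, then softmax*_α(z₁,…,zₙ) converges to i·conj(z_{i₀}) as α → +∞; in particular, the index selected in the limit is the unique maximizer of the imaginary part Im(zᵢ). -/
open Filter Topology

/-- If `w` has negative real part, then `exp (α w) → 0` as `α → +∞`. -/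
theorem tendsto_cexp_ofReal_mul_atTop_of_re_neg {w : ℂ} (hw : w.re < 0) :
    Tendsto (fun α : ℝ => Complex.exp (α * w)) atTop (𝓝 0) := by
  rw [tendsto_zero_iff_norm_tendsto_zero]
  simp only [Complex.norm_exp, Complex.re_ofReal_mul]
  exact Real.tendsto_exp_atBot.comp (tendsto_id.atTop_mul_const_of_neg hw)

/-- If the real part of `w i₀` is strictly maximal, the exponential sums with coefficients `c`,
normalized by `exp (α w i₀)`, converge to the coefficient `c i₀` as `α → +∞`. -/
theorem tendsto_sum_mul_cexp_of_re_lt {ι : Type*} [Fintype ι] {w : ι → ℂ} {i₀ : ι}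
    (hmax : ∀ i, i ≠ i₀ → (w i).re < (w i₀).re) (c : ι → ℂ) :
    Tendsto (fun α : ℝ => ∑ i, c i * Complex.exp (α * (w i - w i₀))) atTop (𝓝 (c i₀)) := by
  classical
  have hterm : ∀ i, Tendsto (fun α : ℝ => c i * Complex.exp (α * (w i - w i₀))) atTop
      (𝓝 (if i = i₀ then c i else 0)) := by
    intro i
    by_cases hi : i = i₀
    · simp [hi]
    · have hre : (w i - w i₀).re < 0 := by simpa using hmax i hi
      simpa [hi] using (tendsto_cexp_ofReal_mul_atTop_of_re_neg hre).const_mul (c i)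
  simpa using tendsto_finsetSum Finset.univ fun i _ => hterm i

/-- The complex softmax converges to the entry of strictly maximal real part as `α → +∞`. -/
theorem tendsto_softmax_of_re_lt {ι : Type*} [Fintype ι] {w : ι → ℂ} {i₀ : ι}
    (hmax : ∀ i, i ≠ i₀ → (w i).re < (w i₀).re) :
    Tendsto (fun α : ℝ => (∑ i, w i * Complex.exp (α * w i)) / ∑ j, Complex.exp (α * w j))
      atTop (𝓝 (w i₀)) := by
  have hnum := tendsto_sum_mul_cexp_of_re_lt hmax w
  have hden := tendsto_sum_mul_cexp_of_re_lt hmax fun _ => 1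
  have hquot := hnum.div hden one_ne_zero
  rw [div_one] at hquot
  refine hquot.congr fun α => ?_
  simp only [Pi.div_apply, mul_sub, Complex.exp_sub, one_mul, ← mul_div_assoc, ← Finset.sum_div]
  exact div_div_div_cancel_right₀ (Complex.exp_ne_zero _) _ _

/-- **Dual softmax at `α → +∞` selects the maximal imaginary part.** For complex numbers
`z₁, …, zₙ` (`n ≥ 1`), the dual softmax `softmax*_α(z) = softmax_α(i·conj z₁, …, i·conj zₙ)`
converges, as `α → +∞`, to `i·conj(z_{i₀})` where `i₀` is the unique index with
strictly maximal imaginary part. -/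
theorem dual_softmax_tendsto_argmax_im (n : ℕ) (z : Fin (n + 1) → ℂ) (i₀ : Fin (n + 1))
    (hmax : ∀ i, i ≠ i₀ → (z i).im < (z i₀).im) :
    Filter.Tendsto
      (fun α : ℝ =>
        (∑ i, (Complex.I * (starRingEnd ℂ) (z i)) *
            Complex.exp ((α : ℂ) * (Complex.I * (starRingEnd ℂ) (z i)))) /
          (∑ j, Complex.exp ((α : ℂ) * (Complex.I * (starRingEnd ℂ) (z j)))))
      Filter.atTop (nhds (Complex.I * (starRingEnd ℂ) (z i₀))) := by
  refine tendsto_softmax_of_re_lt (w := fun i => Complex.I * (starRingEnd ℂ) (z i)) fun i hi => ?_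
  simpa using hmax i hi
end

section
/- Let z ∈ ℂⁿ, δ ∈ ℂᵐ, b ∈ ℂᵐ, and let g : ℂᵐ → ℝ be real-differentiable at w₀ := Wz + b for a given m × n complex matrix W, with (complex-identified) gradient ∇g(w₀) = δ. Write W = A + iB with real matrices A, B, and regard ℓ(A, B) := g((A + iB)z + b) as a real-differentiable function of the real entries of A and B. Then the matrix of Wirtinger weight gradients satisfies ∂ℓ/∂A + i·∂ℓ/∂B = δ · zᴴ, i.e., for all indices p, q: (∂ℓ/∂A[p,q]) + i·(∂ℓ/∂B[p,q]) = δ_p · conj(z_q). -/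
/-- The loss of an affine layer, `ℓ(A, B) = g((A + iB)z + b)`, viewed as a real-valued
function of the real matrices `A` and `B` (encoded as functions `Fin m → Fin n → ℝ`). -/
noncomputable def affineLayerLoss (m n : ℕ) (g : (Fin m → ℂ) → ℝ) (z : Fin n → ℂ) (b : Fin m → ℂ)
    (AB : (Fin m → Fin n → ℝ) × (Fin m → Fin n → ℝ)) : ℝ :=
  g fun p => (∑ q, ((AB.1 p q : ℂ) + Complex.I * (AB.2 p q : ℂ)) * z q) + b p

/-- The real-linear map `(A, B) ↦ (A + iB)z`. -/
noncomputable def complexWeightApply (m n : ℕ) (z : Fin n → ℂ) :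
    (Fin m → Fin n → ℝ) × (Fin m → Fin n → ℝ) →ₗ[ℝ] (Fin m → ℂ) where
  toFun AB p := ∑ q, ((AB.1 p q : ℂ) + Complex.I * (AB.2 p q : ℂ)) * z q
  map_add' AB CD := by
    ext p
    simp only [Prod.fst_add, Prod.snd_add, Pi.add_apply, ← Finset.sum_add_distrib]
    refine Finset.sum_congr rfl fun q _ => ?_
    push_cast
    ring
  map_smul' c AB := by
    ext p
    simp only [Prod.smul_fst, Prod.smul_snd, Pi.smul_apply, smul_eq_mul, RingHom.id_apply,
      Complex.real_smul, Finset.mul_sum]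
    refine Finset.sum_congr rfl fun q _ => ?_
    push_cast
    ring

theorem complexWeightApply_single_left (m n : ℕ) (z : Fin n → ℂ) (p : Fin m) (q : Fin n) :
    complexWeightApply m n z (Pi.single p (Pi.single q 1), 0) = Pi.single p (z q) := by
  ext r
  by_cases h : r = p
  · subst h
    simp [complexWeightApply, Pi.single_apply, apply_ite Complex.ofReal]
  · simp [complexWeightApply, h]

theorem complexWeightApply_single_right (m n : ℕ) (z : Fin n → ℂ) (p : Fin m) (q : Fin n) :
    complexWeightApply m n z (0, Pi.single p (Pi.single q 1)) =
      Pi.single p (Complex.I * z q) := by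
  ext r
  by_cases h : r = p
  · subst h
    simp [complexWeightApply, Pi.single_apply, apply_ite Complex.ofReal]
  · simp [complexWeightApply, h]

theorem fderiv_affineLayerLoss {m n : ℕ} {g : (Fin m → ℂ) → ℝ} {z : Fin n → ℂ}
    {b : Fin m → ℂ} {AB : (Fin m → Fin n → ℝ) × (Fin m → Fin n → ℝ)}
    (hg : DifferentiableAt ℝ g (complexWeightApply m n z AB + b)) :
    fderiv ℝ (affineLayerLoss m n g z b) AB =
      (fderiv ℝ g (complexWeightApply m n z AB + b)).comp
        (complexWeightApply m n z).toContinuousLinearMap :=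
  (hg.hasFDerivAt.comp AB
    ((complexWeightApply m n z).toContinuousLinearMap.hasFDerivAt.add_const b)).fderiv

/-- A real-linear functional on `ℂᵐ` along a complex coordinate axis. -/
theorem map_pi_single_complex {m : ℕ} (f : (Fin m → ℂ) →L[ℝ] ℝ) (p : Fin m) (w : ℂ) :
    f (Pi.single p w) = w.re * f (Pi.single p 1) + w.im * f (Pi.single p Complex.I) := by
  have h : (Pi.single p w : Fin m → ℂ) =
      w.re • (Pi.single p 1 : Fin m → ℂ) + w.im • (Pi.single p Complex.I : Fin m → ℂ) := by
    rw [← Pi.single_smul, ← Pi.single_smul, ← Pi.single_add]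
    simp
  rw [h, map_add, map_smul, map_smul, smul_eq_mul, smul_eq_mul]

/-- **Weight gradients in complex backpropagation.** Let `W = A + iB` be an `m × n`
complex matrix, `w₀ = Wz + b`, and let `g : ℂᵐ → ℝ` be real-differentiable at `w₀` with
complex-identified gradient `∇g(w₀) = δ` (whose `k`-th entry is `∂g/∂x_k + i·∂g/∂y_k`).
Then the Wirtinger weight gradients of `ℓ(A, B) = g((A + iB)z + b)` satisfy
`∂ℓ/∂A[p,q] + i·∂ℓ/∂B[p,q] = δ_p · conj(z_q)`, i.e. `∂ℓ/∂A + i·∂ℓ/∂B = δ·zᴴ`. -/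
theorem backprop_affine_weight_gradients (m n : ℕ) (g : (Fin m → ℂ) → ℝ)
    (z : Fin n → ℂ) (b δ : Fin m → ℂ) (A B : Fin m → Fin n → ℝ) (w₀ : Fin m → ℂ)
    (hw₀ : w₀ = fun p => (∑ q, ((A p q : ℂ) + Complex.I * (B p q : ℂ)) * z q) + b p)
    (hg : DifferentiableAt ℝ g w₀)
    (hδ : ∀ k, δ k = ((fderiv ℝ g w₀ (Pi.single k 1) : ℝ) : ℂ) +
        Complex.I * ((fderiv ℝ g w₀ (Pi.single k Complex.I) : ℝ) : ℂ)) :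
    ∀ p q,
      ((fderiv ℝ (affineLayerLoss m n g z b) (A, B)
          (Pi.single p (Pi.single q (1 : ℝ)), 0) : ℝ) : ℂ) +
        Complex.I *
          ((fderiv ℝ (affineLayerLoss m n g z b) (A, B)
            (0, Pi.single p (Pi.single q (1 : ℝ))) : ℝ) : ℂ) =
      δ p * (starRingEnd ℂ) (z q) := by
  intro p q
  have hw : w₀ = complexWeightApply m n z (A, B) + b := hw₀
  rw [hw] at hg hδ
  rw [fderiv_affineLayerLoss hg, hδ p]
  simp only [ContinuousLinearMap.comp_apply, LinearMap.coe_toContinuousLinearMap',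
    complexWeightApply_single_left, complexWeightApply_single_right]
  rw [map_pi_single_complex _ p (z q), map_pi_single_complex _ p (Complex.I * z q)]
  apply Complex.ext <;> simp <;> ring
end
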